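/- Let α ≥ 1 be real, let n ≥ 2 be a natural number, and let x satisfy −1 < x < −(2α+3)/(2α+5). Then P̃_n^{(α,−1/2)}(x) > P̃₁^{(α,−1/2)}(x). -/

import Mathlib

open Finset

/-- The generalized binomial coefficient `binom(a, k) = a(a-1)⋯(a-k+1)/k!` for real `a`. -/
noncomputable def genBinom (a : ℝ) (k : ℕ) : ℝ :=
  (∏ i ∈ Finset.range k, (a - i)) / (Nat.factorial k)

/-- The Jacobi polynomial
`P_n^{(α,β)}(x) = Σ_{s=0}^n binom(n+α, n-s)·binom(n+β, s)·((x-1)/2)^s·((x+1)/2)^{n-s}`. -/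
noncomputable def jacobiP (n : ℕ) (α β x : ℝ) : ℝ :=
  ∑ s ∈ Finset.range (n + 1),
    genBinom (n + α) (n - s) * genBinom (n + β) s * ((x - 1) / 2) ^ s * ((x + 1) / 2) ^ (n - s)

/-- The normalized Jacobi polynomial `P̃_n^{(α,β)}(x) = P_n^{(α,β)}(x) / P_n^{(α,β)}(1)`. -/
noncomputable def jacobiPt (n : ℕ) (α β x : ℝ) : ℝ :=
  jacobiP n α β x / jacobiP n α β 1

/-!
Put `y = (1 + x) / 2`, and let `U` follow the beta distribution with parameters `1/2` and
`α + 1/2`. The coefficients of `P̃_n^{(α,-1/2)}` are, up to even binomial coefficients, the moments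
of `U`, which gives the Laplace-type formula `P̃_n(2y - 1) = E Re (√y + i√((1 - y)U)) ^ (2n)` and
hence `|P̃_n(2y - 1)| ≤ E (y + (1 - y)U) ^ n`. This bound decreases in `n` and increases in `y`. At
`y = 1 / (2α + 5)`, the zero of `P̃_2 - P̃_1` other than `y = 1`, its value for `n = 6` is already
below `-P̃_1`, which settles all `n ≥ 6`. For `2 ≤ n ≤ 5` the difference `P̃_n - P̃_1` is a rational
function of `α - 1/2` and `1/y - (2α + 5)` with nonnegative coefficients.
-/

open MeasureTheory ProbabilityTheory

/-- The ratio of rising factorials `(a)_k / (c)_k`, which is the `k`-th moment of the beta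
distribution with parameters `a` and `c - a`. -/
noncomputable def pochhammerRatio (a c : ℝ) (k : ℕ) : ℝ :=
  (ascPochhammer ℝ k).eval a / (ascPochhammer ℝ k).eval c

lemma pochhammerRatio_zero (a c : ℝ) : pochhammerRatio a c 0 = 1 := by
  simp [pochhammerRatio]

lemma pochhammerRatio_succ (a c : ℝ) (k : ℕ) :
    pochhammerRatio a c (k + 1) = pochhammerRatio a c k * ((a + k) / (c + k)) := by
  simp only [pochhammerRatio, ascPochhammer_succ_eval, mul_div_mul_comm]

section BetaMoments

variable {a b : ℝ} {E : Type*} [NormedAddCommGroup E]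

lemma beta_add_one_left (ha : a ≠ 0) (hab : a + b ≠ 0) :
    beta (a + 1) b = a / (a + b) * beta a b := by
  rw [beta, beta, add_right_comm, Real.Gamma_add_one ha, Real.Gamma_add_one hab, mul_assoc,
    mul_div_mul_comm]

lemma beta_add_nat_left (ha : 0 < a) (hb : 0 < b) (k : ℕ) :
    beta (a + k) b = pochhammerRatio a (a + b) k * beta a b := by
  induction k with
  | zero => simp [pochhammerRatio_zero]
  | succ k ih =>
    rw [Nat.cast_succ, ← add_assoc, beta_add_one_left (by positivity) (by positivity), ih,
      pochhammerRatio_succ]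
    ring

lemma betaPDFReal_nonneg (ha : 0 < a) (hb : 0 < b) (u : ℝ) : 0 ≤ betaPDFReal a b u := by
  by_cases hu : 0 < u ∧ u < 1
  · exact (betaPDFReal_pos hu.1 hu.2 ha hb).le
  · simp [betaPDFReal, hu]

lemma integral_betaMeasure [NormedSpace ℝ E] (ha : 0 < a) (hb : 0 < b) (f : ℝ → E) :
    ∫ u, f u ∂betaMeasure a b = ∫ u, betaPDFReal a b u • f u := by
  have hpdf : Measurable (betaPDF a b) := (measurable_betaPDFReal a b).ennreal_ofReal
  rw [betaMeasure, integral_withDensity_eq_integral_toReal_smul hpdf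
    (.of_forall fun _ => ENNReal.ofReal_lt_top)]
  simp only [betaPDF, ENNReal.toReal_ofReal (betaPDFReal_nonneg ha hb _)]

lemma integral_betaPDFReal (ha : 0 < a) (hb : 0 < b) : ∫ u, betaPDFReal a b u = 1 := by
  have := isProbabilityMeasureBeta ha hb
  simpa using (integral_betaMeasure ha hb fun _ => (1 : ℝ)).symm

lemma betaPDFReal_mul_pow (ha : 0 < a) (hb : 0 < b) (k : ℕ) (u : ℝ) :
    betaPDFReal a b u * u ^ k = pochhammerRatio a (a + b) k * betaPDFReal (a + k) b u := by
  unfold betaPDFReal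
  split_ifs with hu
  · have hbeta : beta a b ≠ 0 := (beta_pos ha hb).ne'
    have hratio : beta (a + k) b ≠ 0 := (beta_pos (by positivity) hb).ne'
    rw [beta_add_nat_left ha hb] at hratio ⊢
    have hpow : u ^ (a + k - 1) = u ^ (a - 1) * u ^ k := by
      rw [← Real.rpow_add_natCast hu.1.ne', sub_add_eq_add_sub]
    have := left_ne_zero_of_mul hratio
    rw [hpow]
    field_simp
  · simp

lemma integral_pow_betaMeasure (ha : 0 < a) (hb : 0 < b) (k : ℕ) :
    ∫ u, u ^ k ∂betaMeasure a b = pochhammerRatio a (a + b) k := by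
  simp only [integral_betaMeasure ha hb, smul_eq_mul, betaPDFReal_mul_pow ha hb, integral_const_mul,
    integral_betaPDFReal (show 0 < a + k by positivity) hb, mul_one]

lemma ae_mem_Icc_betaMeasure (a b : ℝ) : ∀ᵐ u ∂betaMeasure a b, u ∈ Set.Icc (0 : ℝ) 1 := by
  have hpdf : Measurable (betaPDF a b) := (measurable_betaPDFReal a b).ennreal_ofReal
  rw [betaMeasure, ae_withDensity_iff hpdf]
  refine .of_forall fun u hu => ?_
  by_contra hmem
  have : ¬(0 < u ∧ u < 1) := fun h => hmem ⟨h.1.le, h.2.le⟩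
  simp [betaPDF, betaPDFReal, this] at hu

lemma integrable_betaMeasure (ha : 0 < a) (hb : 0 < b) {f : ℝ → E}
    (hf : ContinuousOn f (Set.Icc 0 1)) :
    Integrable f (betaMeasure a b) := by
  have := isProbabilityMeasureBeta ha hb
  rw [← Measure.restrict_eq_self_of_ae_mem (ae_mem_Icc_betaMeasure a b)]
  exact hf.integrableOn_Icc

lemma integral_sum_mul_pow_betaMeasure (ha : 0 < a) (hb : 0 < b) (N : ℕ) (c : ℕ → ℝ) :
    ∫ u, ∑ k ∈ range N, c k * u ^ k ∂betaMeasure a b =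
      ∑ k ∈ range N, c k * pochhammerRatio a (a + b) k := by
  rw [integral_finsetSum _ fun k _ => integrable_betaMeasure ha hb (by fun_prop)]
  simp only [integral_const_mul, integral_pow_betaMeasure ha hb]

lemma integral_affine_pow_betaMeasure (ha : 0 < a) (hb : 0 < b) (y : ℝ) (n : ℕ) :
    ∫ u, (y + (1 - y) * u) ^ n ∂betaMeasure a b =
      ∑ k ∈ range (n + 1),
        (1 - y) ^ k * y ^ (n - k) * n.choose k * pochhammerRatio a (a + b) k := by
  rw [← integral_sum_mul_pow_betaMeasure ha hb]
  congr! 2 with u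
  rw [add_comm, add_pow]
  exact sum_congr rfl fun k _ => by rw [mul_pow]; ring

lemma integral_affine_pow_betaMeasure_le (ha : 0 < a) (hb : 0 < b) {y z : ℝ} (hy : 0 ≤ y)
    (hyz : y ≤ z) (hz : z ≤ 1) {m n : ℕ} (hmn : m ≤ n) :
    ∫ u, (y + (1 - y) * u) ^ n ∂betaMeasure a b ≤
      ∫ u, (z + (1 - z) * u) ^ m ∂betaMeasure a b := by
  refine integral_mono_ae (integrable_betaMeasure ha hb (by fun_prop))
    (integrable_betaMeasure ha hb (by fun_prop)) ?_
  filter_upwards [ae_mem_Icc_betaMeasure a b] with u ⟨hu0, hu1⟩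
  have h0 : 0 ≤ y + (1 - y) * u := by nlinarith
  have h1 : y + (1 - y) * u ≤ 1 := by nlinarith
  have hle : y + (1 - y) * u ≤ z + (1 - z) * u := by nlinarith
  exact (pow_le_pow_of_le_one h0 h1 hmn).trans (pow_le_pow_left₀ h0 hle m)

end BetaMoments

/-- The homogeneous polynomial in `p` and `q` that equals `Re ((√p + i√q) ^ (2n))` for
nonnegative `p` and `q`; for `p + q = 1` it is the Chebyshev value `T_{2n}(√p)`. -/
noncomputable def evenPowRe (n : ℕ) (p q : ℝ) : ℝ :=
  ∑ k ∈ range (n + 1), (-1) ^ k * (2 * n).choose (2 * k) * q ^ k * p ^ (n - k)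

lemma sum_range_two_mul_add_one {M : Type*} [AddCommMonoid M] (n : ℕ) (f : ℕ → M) :
    ∑ j ∈ range (2 * n + 1), f j =
      ∑ k ∈ range (n + 1), f (2 * k) + ∑ k ∈ range n, f (2 * k + 1) := by
  induction n with
  | zero => simp
  | succ n ih =>
    rw [mul_add_one, sum_range_succ, sum_range_succ, ih, sum_range_succ _ (n + 1),
      sum_range_succ (fun k => f (2 * k + 1)), mul_add_one]
    abel

lemma re_add_mul_I_pow_two_mul (n : ℕ) (s t : ℝ) :
    ((s + t * Complex.I) ^ (2 * n)).re = evenPowRe n (s ^ 2) (t ^ 2) := by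
  have hodd (k : ℕ) : ((t * Complex.I) ^ (2 * k + 1) * (s : ℂ) ^ (2 * n - (2 * k + 1)) *
      (2 * n).choose (2 * k + 1)).re = 0 := by
    rw [mul_pow, pow_succ Complex.I, pow_mul Complex.I, Complex.I_sq]
    have : (t : ℂ) ^ (2 * k + 1) * ((-1) ^ k * Complex.I) * s ^ (2 * n - (2 * k + 1)) *
        (2 * n).choose (2 * k + 1) = (t ^ (2 * k + 1) * (-1) ^ k * s ^ (2 * n - (2 * k + 1)) *
          (2 * n).choose (2 * k + 1) : ℝ) * Complex.I := by
      push_cast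
      ring
    rw [this, Complex.re_ofReal_mul, Complex.I_re, mul_zero]
  have heven (k : ℕ) : ((t * Complex.I) ^ (2 * k) * (s : ℂ) ^ (2 * n - 2 * k) *
      (2 * n).choose (2 * k)).re =
        (-1) ^ k * (2 * n).choose (2 * k) * (t ^ 2) ^ k * (s ^ 2) ^ (n - k) := by
    rw [mul_pow, pow_mul Complex.I, Complex.I_sq, ← Nat.mul_sub, pow_mul, pow_mul]
    have : ((t : ℂ) ^ 2) ^ k * (-1) ^ k * ((s : ℂ) ^ 2) ^ (n - k) * (2 * n).choose (2 * k) =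
        ((-1) ^ k * (2 * n).choose (2 * k) * (t ^ 2) ^ k * (s ^ 2) ^ (n - k) : ℝ) := by
      push_cast
      ring
    rw [this, Complex.ofReal_re]
  rw [add_comm, add_pow, Complex.re_sum, sum_range_two_mul_add_one]
  simp only [hodd, heven, sum_const_zero, add_zero, evenPowRe]

lemma abs_evenPowRe_le (n : ℕ) {p q : ℝ} (hp : 0 ≤ p) (hq : 0 ≤ q) :
    |evenPowRe n p q| ≤ (p + q) ^ n := by
  have hnorm : ‖(√p + √q * Complex.I : ℂ)‖ ^ 2 = p + q := by
    rw [Complex.sq_norm, Complex.normSq_add_mul_I, Real.sq_sqrt hp, Real.sq_sqrt hq]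
  calc |evenPowRe n p q| = |((√p + √q * Complex.I : ℂ) ^ (2 * n)).re| := by
        rw [re_add_mul_I_pow_two_mul, Real.sq_sqrt hp, Real.sq_sqrt hq]
    _ ≤ ‖(√p + √q * Complex.I : ℂ) ^ (2 * n)‖ := Complex.abs_re_le_norm _
    _ = (p + q) ^ n := by rw [norm_pow, pow_mul, hnorm]

lemma genBinom_succ_mul (a : ℝ) (k : ℕ) :
    genBinom a (k + 1) * (k + 1) = genBinom a k * (a - k) := by
  rw [genBinom, genBinom, prod_range_succ, Nat.factorial_succ]
  push_cast
  field_simp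

lemma genBinom_pos {a : ℝ} {k : ℕ} (h : (k : ℝ) < a + 1) : 0 < genBinom a k := by
  refine div_pos (prod_pos fun i hi => ?_) (by positivity)
  have : (i : ℝ) + 1 ≤ k := mod_cast mem_range.mp hi
  linarith

lemma jacobiP_one (n : ℕ) (α β : ℝ) : jacobiP n α β 1 = genBinom (n + α) n := by
  rw [jacobiP, sum_eq_single 0 (fun s _ hs => by simp [hs]) (by simp)]
  simp [genBinom]

lemma choose_two_mul_succ_mul (s m : ℕ) :
    (2 * (s + 1 + m)).choose (2 * (s + 1)) * ((2 * s + 1) * (s + 1)) =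
      (2 * (s + 1 + m)).choose (2 * s) * ((m + 1) * (2 * m + 1)) := by
  have h1 := Nat.choose_succ_right_eq (2 * (s + 1 + m)) (2 * s)
  have h2 := Nat.choose_succ_right_eq (2 * (s + 1 + m)) (2 * s + 1)
  rw [show 2 * (s + 1 + m) - 2 * s = 2 * (m + 1) by lia] at h1
  rw [show 2 * (s + 1 + m) - (2 * s + 1) = 2 * m + 1 by lia] at h2
  rw [mul_add_one 2 s]
  linarith [congrArg (· * (2 * s + 1)) h2, congrArg (· * (2 * m + 1)) h1]

lemma genBinom_mul_genBinom_neg_half {α : ℝ} (hα : -1 < α) {n s : ℕ} (hs : s ≤ n) :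
    genBinom (n + α) (n - s) * genBinom (n + -1 / 2) s =
      genBinom (n + α) n * ((2 * n).choose (2 * s) * pochhammerRatio (1 / 2) (α + 1) s) := by
  induction s with
  | zero => simp [genBinom, pochhammerRatio_zero]
  | succ s ih =>
    obtain ⟨m, rfl⟩ := Nat.exists_eq_add_of_le hs
    have hα_ne : α + 1 + s ≠ 0 := by
      have : (0 : ℝ) ≤ s := s.cast_nonneg
      linarith
    have hleft := genBinom_succ_mul ((s + 1 + m : ℕ) + α) m
    have hright := genBinom_succ_mul ((s + 1 + m : ℕ) + -1 / 2) s
    have hchoose : _ = (_ : ℝ) := congrArg Nat.cast (choose_two_mul_succ_mul s m)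
    specialize ih (by lia)
    rw [show s + 1 + m - s = m + 1 by lia] at ih
    rw [show s + 1 + m - (s + 1) = m by lia]
    have hratio : pochhammerRatio (1 / 2) (α + 1) (s + 1) * (α + 1 + s) =
        pochhammerRatio (1 / 2) (α + 1) s * (1 / 2 + s) := by
      rw [pochhammerRatio_succ]
      field_simp
    push_cast at *
    have hcancel : (α + 1 + s) * ((s + 1) * (2 * s + 1)) ≠ 0 :=
      mul_ne_zero hα_ne (by positivity)
    refine mul_left_cancel₀ hcancel ?_
    generalize genBinom (s + 1 + m + α) (s + 1 + m) = G at ih ⊢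
    linear_combination
      -(genBinom (s + 1 + m + -1 / 2) (s + 1) * (s + 1) * (2 * s + 1)) * hleft +
      genBinom (s + 1 + m + α) (m + 1) * (m + 1) * (2 * s + 1) * hright +
      (m + 1) * (m + 1 / 2) * (2 * s + 1) * ih -
      G * pochhammerRatio (1 / 2) (α + 1) s * (1 / 2 + s) * hchoose -
      G * (2 * (s + 1 + m)).choose (2 * (s + 1)) * (s + 1) * (2 * s + 1) * hratio

lemma jacobiPt_neg_half_eq_sum {α : ℝ} (hα : -1 < α) (n : ℕ) (y : ℝ) :
    jacobiPt n α (-1 / 2) (2 * y - 1) = ∑ k ∈ range (n + 1),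
      (-1) ^ k * (2 * n).choose (2 * k) * (1 - y) ^ k * y ^ (n - k) *
        pochhammerRatio (1 / 2) (α + 1) k := by
  have hpos : 0 < genBinom (n + α) n := genBinom_pos (by linarith)
  rw [jacobiPt, jacobiP_one, div_eq_iff hpos.ne', jacobiP, sum_mul]
  refine sum_congr rfl fun k hk => ?_
  rw [genBinom_mul_genBinom_neg_half hα (mem_range_succ_iff.mp hk),
    show (2 * y - 1 - 1) / 2 = -1 * (1 - y) by ring, show (2 * y - 1 + 1) / 2 = y by ring, mul_pow]
  ring

lemma jacobiPt_neg_half_eq_integral {α : ℝ} (hα : -1 / 2 < α) (n : ℕ) (y : ℝ) :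
    jacobiPt n α (-1 / 2) (2 * y - 1) =
      ∫ u, evenPowRe n y ((1 - y) * u) ∂betaMeasure (1 / 2) (α + 1 / 2) := by
  rw [jacobiPt_neg_half_eq_sum (by linarith), show α + 1 = 1 / 2 + (α + 1 / 2) by ring,
    ← integral_sum_mul_pow_betaMeasure (by norm_num) (by linarith)]
  congr! 2 with u
  exact sum_congr rfl fun k _ => by rw [mul_pow]; ring

lemma abs_jacobiPt_neg_half_le {α : ℝ} (hα : -1 / 2 < α) (n : ℕ) {y : ℝ} (hy0 : 0 ≤ y)
    (hy1 : y ≤ 1) :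
    |jacobiPt n α (-1 / 2) (2 * y - 1)| ≤
      ∫ u, (y + (1 - y) * u) ^ n ∂betaMeasure (1 / 2) (α + 1 / 2) := by
  have ha : (0 : ℝ) < 1 / 2 := by norm_num
  have hb : 0 < α + 1 / 2 := by linarith
  rw [jacobiPt_neg_half_eq_integral hα, ← Real.norm_eq_abs]
  refine norm_integral_le_of_norm_le (integrable_betaMeasure ha hb (by fun_prop)) ?_
  filter_upwards [ae_mem_Icc_betaMeasure (1 / 2) (α + 1 / 2)] with u ⟨hu, _⟩
  exact abs_evenPowRe_le n hy0 (mul_nonneg (sub_nonneg.mpr hy1) hu)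

lemma jacobiPt_one_neg_half {α : ℝ} (hα : -1 < α) (y : ℝ) :
    jacobiPt 1 α (-1 / 2) (2 * y - 1) = ((2 * α + 3) * y - 1) / (2 * α + 2) := by
  have : α + 1 ≠ 0 := by linarith
  simp only [jacobiPt_neg_half_eq_sum hα, sum_range_succ, sum_range_zero, pochhammerRatio_succ,
    pochhammerRatio_zero, Nat.choose]
  push_cast
  rw [add_zero (α + 1)]
  field_simp
  ring

lemma jacobiPt_one_lt_of_le_five {α : ℝ} (hα : 1 / 2 ≤ α) {n : ℕ} (hn2 : 2 ≤ n) (hn5 : n ≤ 5)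
    {y : ℝ} (hy0 : 0 < y) (hy1 : y < 1 / (2 * α + 5)) :
    jacobiPt 1 α (-1 / 2) (2 * y - 1) < jacobiPt n α (-1 / 2) (2 * y - 1) := by
  obtain ⟨t, ht, rfl⟩ : ∃ t, 0 < t ∧ y = 1 / (2 * α + 5 + t) :=
    ⟨1 / y - (2 * α + 5), by rwa [sub_pos, lt_one_div (by linarith) hy0], by simp⟩
  obtain ⟨b, hb, rfl⟩ : ∃ b, 0 ≤ b ∧ α = b + 1 / 2 := ⟨α - 1 / 2, by linarith, by ring⟩
  simp only [jacobiPt_neg_half_eq_sum (show -1 < b + 1 / 2 by linarith)]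
  rw [← sub_pos]
  interval_cases n <;>
  · simp only [sum_range_succ, sum_range_zero, pochhammerRatio_succ, pochhammerRatio_zero,
      Nat.choose]
    push_cast
    field_simp
    rw [← sub_pos]
    ring_nf
    positivity

lemma integral_affine_pow_six_lt {α : ℝ} (hα : 1 / 2 ≤ α) :
    ∫ u, (1 / (2 * α + 5) + (1 - 1 / (2 * α + 5)) * u) ^ 6 ∂betaMeasure (1 / 2) (α + 1 / 2) <
      2 / ((2 * α + 5) * (2 * α + 2)) := by
  obtain ⟨b, hb, rfl⟩ : ∃ b, 0 ≤ b ∧ α = b + 1 / 2 := ⟨α - 1 / 2, by linarith, by ring⟩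
  rw [integral_affine_pow_betaMeasure (by norm_num) (by positivity), ← sub_pos]
  simp only [sum_range_succ, sum_range_zero, pochhammerRatio_succ, pochhammerRatio_zero, Nat.choose]
  push_cast
  field_simp
  rw [← sub_pos]
  ring_nf
  positivity

lemma jacobiPt_one_lt_of_six_le {α : ℝ} (hα : 1 / 2 ≤ α) {n : ℕ} (hn : 6 ≤ n) {y : ℝ}
    (hy0 : 0 ≤ y) (hy1 : y ≤ 1 / (2 * α + 5)) :
    jacobiPt 1 α (-1 / 2) (2 * y - 1) < jacobiPt n α (-1 / 2) (2 * y - 1) := by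
  set z := 1 / (2 * α + 5) with hz
  have hz1 : z ≤ 1 := by
    rw [hz, div_le_one (by linarith)]
    linarith
  calc jacobiPt 1 α (-1 / 2) (2 * y - 1) = ((2 * α + 3) * y - 1) / (2 * α + 2) :=
        jacobiPt_one_neg_half (by linarith) y
    _ ≤ ((2 * α + 3) * z - 1) / (2 * α + 2) := by gcongr
    _ = -(2 / ((2 * α + 5) * (2 * α + 2))) := by rw [hz]; field_simp; ring
    _ < -∫ u, (z + (1 - z) * u) ^ 6 ∂betaMeasure (1 / 2) (α + 1 / 2) :=
        neg_lt_neg (integral_affine_pow_six_lt hα)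
    _ ≤ -∫ u, (y + (1 - y) * u) ^ n ∂betaMeasure (1 / 2) (α + 1 / 2) :=
        neg_le_neg (integral_affine_pow_betaMeasure_le (by norm_num) (by linarith) hy0 hy1 hz1 hn)
    _ ≤ jacobiPt n α (-1 / 2) (2 * y - 1) :=
        neg_le_of_abs_le (abs_jacobiPt_neg_half_le (by linarith) n hy0 (hy1.trans hz1))

theorem jacobiPt_gt_beta_half_general (α : ℝ) (hα : 1 / 2 ≤ α) (n : ℕ) (hn : 2 ≤ n) (x : ℝ)
    (hx0 : -1 < x) (hx1 : x < -(2 * α + 3) / (2 * α + 5)) :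
    jacobiPt n α (-1/2) x > jacobiPt 1 α (-1/2) x := by
  obtain ⟨y, rfl⟩ : ∃ y, x = 2 * y - 1 := ⟨(x + 1) / 2, by ring⟩
  have hy0 : 0 < y := by linarith
  have hd : 0 < 2 * α + 5 := by linarith
  have hy1 : y < 1 / (2 * α + 5) := by
    rw [lt_div_iff₀ hd] at hx1 ⊢
    linarith
  rcases Nat.lt_or_ge 5 n with h6 | h5
  · exact jacobiPt_one_lt_of_six_le hα h6 hy0.le hy1.le
  · exact jacobiPt_one_lt_of_le_five hα hn h5 hy0 hy1

/-- For `α ≥ 1`, `n ≥ 2` and `-1 < x < -(2α+3)/(2α+5)`, the normalized Jacobi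
polynomials with `β = -1/2` satisfy `P̃_n^{(α,-1/2)}(x) > P̃₁^{(α,-1/2)}(x)`. -/
theorem jacobiPt_gt_beta_half (α : ℝ) (hα : 1 ≤ α) (n : ℕ) (hn : 2 ≤ n) (x : ℝ)
    (hx0 : -1 < x) (hx1 : x < -(2 * α + 3) / (2 * α + 5)) :
    jacobiPt n α (-1/2) x > jacobiPt 1 α (-1/2) x :=
  jacobiPt_gt_beta_half_general α (by linarith) n hn x hx0 hx1
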